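/- Let d ≥ 1 and M ∈ M_d(ℂ), and let ψ = U·e₀ be a Haar-random pure state in ℂ^d (U Haar-random in U(d), e₀ a fixed unit vector). Then E[⟨ψ|M|ψ⟩²] = ((Tr M)² + Tr(M²)) / (d(d+1)). -/

import Mathlib

open Matrix MeasureTheory

/-!
The forms `(A, B) ↦ E[⟨ψ|A|ψ⟩ ⟨ψ|B|ψ⟩]` and `(A, B) ↦ Tr A Tr B + Tr (A B)` are both symmetric and
unchanged when the two bras in `|v⟩⟨w| ⊗ |w⟩⟨v|` are exchanged. By polarization over the fourth
roots of unity, such a form is determined by its values at the pairs `(|v⟩⟨v|, |v⟩⟨v|)`. There both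
forms are multiples of `‖v‖⁴`, the first because the unitary group acts transitively on spheres.
Hence they are proportional, and the constant is found by taking `A = B = 1`.
-/

section PureState

variable {n : Type*}

/-- The (unnormalised) pure state `|v⟩⟨v|`. -/
def pureState (v : n → ℂ) : Matrix n n ℂ := vecMulVec v (star v)

lemma pureState_add_smul (v w : n → ℂ) (c : ℂ) :
    pureState (v + c • w) = pureState v + star c • vecMulVec v (star w) +
      c • vecMulVec w (star v) + (star c * c) • pureState w := by
  simp only [pureState, star_add, star_smul, add_vecMulVec, vecMulVec_add, smul_vecMulVec,
    vecMulVec_smul]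
  module

lemma pureState_smul (c : ℂ) (v : n → ℂ) : pureState (c • v) = (star c * c) • pureState v := by
  simp only [pureState, star_smul, smul_vecMulVec, vecMulVec_smul, smul_smul, mul_comm]

lemma pureState_mulVec [Fintype n] (V : Matrix n n ℂ) (v : n → ℂ) :
    pureState (V *ᵥ v) = V * pureState v * Vᴴ := by
  rw [pureState, pureState, star_mulVec, mul_vecMulVec, vecMulVec_mul]

lemma sum_I_pow_smul_pureState_add_smul (v w : n → ℂ) :
    ∑ k ∈ Finset.range 4, Complex.I ^ k • pureState (v + Complex.I ^ k • w) =
      (4 : ℂ) • vecMulVec v (star w) := by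
  simp only [pureState_add_smul, Finset.sum_range_succ, Finset.sum_range_zero,
    pow_zero, pow_one, Complex.I_sq, Complex.I_pow_three, Complex.star_def, map_one, map_neg,
    Complex.conj_I, smul_add, smul_smul, neg_mul, mul_neg, Complex.I_mul_I]
  module

lemma vecMulVec_star_mem_span_range_pureState (v w : n → ℂ) :
    vecMulVec v (star w) ∈ Submodule.span ℂ (Set.range (pureState (n := n))) := by
  rw [← Submodule.smul_mem_iff _ (by norm_num : (4 : ℂ) ≠ 0),
    ← sum_I_pow_smul_pureState_add_smul]
  exact Submodule.sum_mem _ fun k _ ↦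
    Submodule.smul_mem _ _ (Submodule.subset_span (Set.mem_range_self _))

lemma span_range_pureState [Finite n] :
    Submodule.span ℂ (Set.range (pureState (n := n))) = ⊤ := by
  classical
  have := Fintype.ofFinite n
  refine eq_top_iff.2 fun A _ ↦ ?_
  rw [matrix_eq_sum_single A]
  refine Submodule.sum_mem _ fun i _ ↦ Submodule.sum_mem _ fun j _ ↦ ?_
  rw [← mul_one (A i j), ← smul_eq_mul, ← smul_single, single_eq_single_vecMulVec_single]
  simpa using Submodule.smul_mem _ (A i j)
    (vecMulVec_star_mem_span_range_pureState (Pi.single i 1) (Pi.single j 1))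

/-- A symmetric bilinear form on matrices that, read as a functional of `A ⊗ B`, is unchanged when
the two bras in `|v⟩⟨w| ⊗ |w⟩⟨v|` are exchanged. Such forms factor through the restriction of
`A ⊗ B` to the symmetric subspace of `ℂⁿ ⊗ ℂⁿ`, which makes them determined by their values at
`A = B = |v⟩⟨v|`. -/
structure IsExchangeSymm (G : LinearMap.BilinForm ℂ (Matrix n n ℂ)) : Prop where
  symm : G.IsSymm
  exchange (v w : n → ℂ) : G (vecMulVec v (star w)) (vecMulVec w (star v)) =
    G (pureState v) (pureState w)

namespace IsExchangeSymm

variable {G H : LinearMap.BilinForm ℂ (Matrix n n ℂ)}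

lemma sum_apply_pureState_add_smul (hG : IsExchangeSymm G) (v w : n → ℂ) :
    ∑ k ∈ Finset.range 4,
        G (pureState (v + Complex.I ^ k • w)) (pureState (v + Complex.I ^ k • w)) =
      4 * G (pureState v) (pureState v) + 4 * G (pureState w) (pureState w) +
        16 * G (pureState v) (pureState w) := by
  simp only [pureState_add_smul, Finset.sum_range_succ, Finset.sum_range_zero, map_add, map_smul,
    LinearMap.add_apply, LinearMap.smul_apply, smul_eq_mul, hG.exchange,
    hG.symm.eq (pureState w) (pureState v), pow_zero, pow_one, Complex.I_sq, Complex.I_pow_three,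
    Complex.star_def, map_one, map_neg, Complex.conj_I, neg_mul, mul_neg, Complex.I_mul_I]
  ring_nf
  simp only [Complex.I_sq]
  ring_nf

theorem ext_of_apply_pureState [Finite n] (hG : IsExchangeSymm G) (hH : IsExchangeSymm H)
    (h : ∀ v : n → ℂ, G (pureState v) (pureState v) = H (pureState v) (pureState v)) : G = H := by
  have hvw (v w : n → ℂ) : G (pureState v) (pureState w) = H (pureState v) (pureState w) := by
    have hsum := hG.sum_apply_pureState_add_smul v w
    simp only [h, hH.sum_apply_pureState_add_smul v w] at hsum
    linear_combination -hsum / 16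
  refine LinearMap.ext_on_range span_range_pureState fun v ↦ ?_
  exact LinearMap.ext_on_range span_range_pureState fun w ↦ hvw v w

lemma smul (hG : IsExchangeSymm G) (c : ℂ) : IsExchangeSymm (c • G) where
  symm := ⟨fun A B ↦ by simp only [LinearMap.smul_apply, hG.symm.eq A B]⟩
  exchange v w := by simp only [LinearMap.smul_apply, hG.exchange]

end IsExchangeSymm

end PureState

section SwapTrace

variable {n : Type*} [Fintype n]

/-- The form `(A, B) ↦ Tr ((A ⊗ B) (1 + SWAP))`, written without tensor products. It is twice the
trace of `A ⊗ B` against the projection onto the symmetric subspace. -/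
def swapTraceForm (n : Type*) [Fintype n] : LinearMap.BilinForm ℂ (Matrix n n ℂ) :=
  LinearMap.mk₂ ℂ (fun A B ↦ A.trace * B.trace + (A * B).trace)
    (fun A A' B ↦ by simp only [trace_add, add_mul]; ring)
    (fun c A B ↦ by simp only [trace_smul, smul_mul_assoc, smul_add])
    (fun A B B' ↦ by simp only [trace_add, mul_add]; ring)
    (fun c A B ↦ by simp only [trace_smul, mul_smul_comm, smul_add])

lemma swapTraceForm_apply (A B : Matrix n n ℂ) :
    swapTraceForm n A B = A.trace * B.trace + (A * B).trace := rfl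

lemma isExchangeSymm_swapTraceForm : IsExchangeSymm (swapTraceForm n) where
  symm := ⟨fun A B ↦ by simp only [swapTraceForm_apply, trace_mul_comm A B, mul_comm A.trace]⟩
  exchange v w := by
    simp only [swapTraceForm_apply, pureState, vecMulVec_mul_vecMulVec, trace_vecMulVec,
      trace_smul, vecMulVec_smul, smul_eq_mul, dotProduct_comm _ (star _)]
    ring

lemma swapTraceForm_pureState_self (v : n → ℂ) :
    swapTraceForm n (pureState v) (pureState v) = 2 * (star v ⬝ᵥ v) ^ 2 := by
  simp only [swapTraceForm_apply, pureState, vecMulVec_mul_vecMulVec, trace_vecMulVec,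
    trace_smul, vecMulVec_smul, smul_eq_mul, dotProduct_comm _ (star _)]
  ring

end SwapTrace

section Unitary

variable {n : Type*} [Fintype n] [DecidableEq n]

lemma exists_mem_unitaryGroup_mulVec_smul_single_eq {𝕜 : Type*} [RCLike 𝕜] (i : n) (v : n → 𝕜) :
    ∃ V ∈ unitaryGroup n 𝕜, ∃ r : 𝕜, V *ᵥ (r • Pi.single i 1) = v := by
  rcases eq_or_ne v 0 with rfl | hv
  · exact ⟨1, one_mem _, 0, by simp⟩
  set w : EuclideanSpace 𝕜 n := WithLp.toLp 2 v
  have hw : w ≠ 0 := by simpa [w] using hv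
  have hunit : Orthonormal 𝕜 (({i} : Set n).domRestrict fun _ ↦ (‖w‖⁻¹ : 𝕜) • w) := by
    rw [orthonormal_iff_ite]
    intro j k
    rw [if_pos (Subsingleton.elim j k)]
    exact inner_self_eq_one_of_norm_eq_one (norm_smul_inv_norm hw)
  obtain ⟨b, hb⟩ := hunit.exists_orthonormalBasis_extension_of_card_eq (by simp)
  refine ⟨_, (EuclideanSpace.basisFun n 𝕜).toMatrix_orthonormalBasis_mem_unitary b, ‖w‖, ?_⟩
  have hnorm : (‖w‖ : 𝕜) ≠ 0 := by simpa using hw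
  ext j
  simp only [mulVec_smul, mulVec_single_one, Pi.smul_apply, col_apply, smul_eq_mul,
    Module.Basis.toMatrix_apply, hb i rfl]
  simp [w, hnorm]

lemma star_mulVec_dotProduct_mulVec_of_mem_unitaryGroup {U : Matrix n n ℂ}
    (hU : U ∈ unitaryGroup n ℂ) (x : n → ℂ) :
    star (U *ᵥ x) ⬝ᵥ (U *ᵥ x) = star x ⬝ᵥ x := by
  have hUU : Uᴴ * U = 1 := mem_unitaryGroup_iff'.1 hU
  rw [star_mulVec, ← dotProduct_mulVec, mulVec_mulVec, hUU, one_mulVec]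

lemma norm_unitaryGroup_mulVec_le (U : unitaryGroup n ℂ) (e₀ : n → ℂ) :
    ‖(U : Matrix n n ℂ) *ᵥ e₀‖ ≤ ∑ j, ‖e₀ j‖ := by
  refine (pi_norm_le_iff_of_nonneg (by positivity)).2 fun i ↦ (norm_sum_le _ _).trans ?_
  refine Finset.sum_le_sum fun j _ ↦ ?_
  rw [norm_mul]
  exact mul_le_of_le_one_left (norm_nonneg _) (entry_norm_bound_of_unitary U.2 i j)

lemma continuous_unitaryGroup_mulVec (e₀ : n → ℂ) :
    Continuous fun U : unitaryGroup n ℂ ↦ (U : Matrix n n ℂ) *ᵥ e₀ := by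
  fun_prop

end Unitary

section Moments

variable {n : Type*} [Fintype n]

/-- The expectation value `⟨x|A|x⟩`, as a linear functional of the observable `A`. -/
def expectation (x : n → ℂ) : Matrix n n ℂ →ₗ[ℂ] ℂ where
  toFun A := star x ⬝ᵥ A *ᵥ x
  map_add' A B := by rw [add_mulVec, dotProduct_add]
  map_smul' c A := by rw [smul_mulVec, dotProduct_smul, RingHom.id_apply]

lemma expectation_apply (x : n → ℂ) (A : Matrix n n ℂ) :
    expectation x A = star x ⬝ᵥ A *ᵥ x := rfl

lemma expectation_vecMulVec (x v w : n → ℂ) :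
    expectation x (vecMulVec v w) = (star x ⬝ᵥ v) * (w ⬝ᵥ x) := by
  rw [expectation_apply, vecMulVec_mulVec, op_smul_eq_smul, dotProduct_smul, smul_eq_mul, mul_comm]

lemma expectation_mulVec (V : Matrix n n ℂ) (x : n → ℂ) (A : Matrix n n ℂ) :
    expectation (V *ᵥ x) A = expectation x (Vᴴ * A * V) := by
  simp only [expectation_apply, star_mulVec, ← mulVec_mulVec, dotProduct_mulVec, vecMul_vecMul]

lemma continuous_expectation (A : Matrix n n ℂ) : Continuous fun x ↦ expectation x A := by
  simp only [expectation_apply]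
  fun_prop

variable {ν : Measure (n → ℂ)}

lemma memLp_expectation (hν : MemLp id 4 ν) (A : Matrix n n ℂ) :
    MemLp (fun x ↦ expectation x A) 2 ν := by
  have : ENNReal.HolderTriple 4 4 2 := ⟨by
    rw [← two_mul, ← ENNReal.toReal_eq_toReal_iff' (by finiteness) (by finiteness)]
    norm_num⟩
  have hcoord (i : n) : MemLp (fun x : n → ℂ ↦ x i) 4 ν :=
    (ContinuousLinearMap.proj (R := ℂ) (φ := fun _ : n ↦ ℂ) i).comp_memLp' hν
  simp only [expectation_apply, dotProduct, mulVec]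
  exact memLp_finsetSum _ fun i _ ↦
    (memLp_finsetSum _ fun j _ ↦ (hcoord j).const_mul _).mul (hcoord i).star

lemma integrable_expectation_mul (hν : MemLp id 4 ν) (A B : Matrix n n ℂ) :
    Integrable (fun x ↦ expectation x A * expectation x B) ν :=
  (memLp_expectation hν A).integrable_mul (memLp_expectation hν B)

/-- The second-moment form `(A, B) ↦ E[⟨x|A|x⟩ ⟨x|B|x⟩]` of a random vector `x` with law `ν`. The
fourth moment is required to be finite because linearity fails for junk values of the integral. -/
noncomputable def secondMomentForm (hν : MemLp id 4 ν) : LinearMap.BilinForm ℂ (Matrix n n ℂ) :=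
  LinearMap.mk₂ ℂ (fun A B ↦ ∫ x, expectation x A * expectation x B ∂ν)
    (fun A A' B ↦ by
      simp only [map_add, add_mul]
      exact integral_add (integrable_expectation_mul hν A B) (integrable_expectation_mul hν A' B))
    (fun c A B ↦ by simp only [map_smul, smul_mul_assoc, integral_smul])
    (fun A B B' ↦ by
      simp only [map_add, mul_add]
      exact integral_add (integrable_expectation_mul hν A B) (integrable_expectation_mul hν A B'))
    (fun c A B ↦ by simp only [map_smul, mul_smul_comm, integral_smul])

lemma secondMomentForm_apply (hν : MemLp id 4 ν) (A B : Matrix n n ℂ) :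
    secondMomentForm hν A B = ∫ x, expectation x A * expectation x B ∂ν := rfl

lemma isExchangeSymm_secondMomentForm (hν : MemLp id 4 ν) :
    IsExchangeSymm (secondMomentForm hν) where
  symm := ⟨fun A B ↦ by simp only [secondMomentForm_apply, mul_comm]⟩
  exchange v w := by
    simp only [secondMomentForm_apply, pureState, expectation_vecMulVec]
    refine integral_congr_ae (.of_forall fun x ↦ ?_)
    ring

variable [DecidableEq n]

/-- A measure on `ℂⁿ` invariant under the action of the unitary group. -/
def IsUnitarilyInvariant (ν : Measure (n → ℂ)) : Prop :=
  ∀ V ∈ unitaryGroup n ℂ, ν.map (V *ᵥ ·) = ν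

lemma secondMomentForm_conj (hν : MemLp id 4 ν) (hinv : IsUnitarilyInvariant ν)
    {V : Matrix n n ℂ} (hV : V ∈ unitaryGroup n ℂ) (A B : Matrix n n ℂ) :
    secondMomentForm hν (V * A * Vᴴ) (V * B * Vᴴ) = secondMomentForm hν A B := by
  have hconj (x : n → ℂ) (C : Matrix n n ℂ) :
      expectation (V *ᵥ x) (V * C * Vᴴ) = expectation x C := by
    have hVV : Vᴴ * V = 1 := mem_unitaryGroup_iff'.1 hV
    rw [expectation_mulVec, ← mul_assoc, ← mul_assoc, hVV, one_mul, mul_assoc, hVV, mul_one]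
  have hcont : Continuous (V *ᵥ · : (n → ℂ) → n → ℂ) := by fun_prop
  simp only [secondMomentForm_apply]
  conv_lhs => rw [← hinv V hV]
  rw [integral_map hcont.aemeasurable]
  · simp only [hconj]
  · exact ((continuous_expectation _).mul (continuous_expectation _)).aestronglyMeasurable

lemma secondMomentForm_pureState_self (hν : MemLp id 4 ν) (hinv : IsUnitarilyInvariant ν)
    (i : n) (v : n → ℂ) :
    secondMomentForm hν (pureState v) (pureState v) =
      (star v ⬝ᵥ v) ^ 2 *
        secondMomentForm hν (pureState (Pi.single i 1)) (pureState (Pi.single i 1)) := by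
  obtain ⟨V, hV, r, rfl⟩ := exists_mem_unitaryGroup_mulVec_smul_single_eq i v
  have hnorm : star (V *ᵥ (r • Pi.single i 1)) ⬝ᵥ (V *ᵥ (r • Pi.single i 1)) = star r * r := by
    rw [star_mulVec_dotProduct_mulVec_of_mem_unitaryGroup hV]
    simp [mul_comm]
  rw [hnorm, pureState_mulVec, secondMomentForm_conj hν hinv hV, pureState_smul]
  simp only [map_smul, LinearMap.smul_apply, smul_eq_mul]
  ring

lemma exists_secondMomentForm_eq_smul [Nonempty n] (hν : MemLp id 4 ν)
    (hinv : IsUnitarilyInvariant ν) : ∃ c : ℂ, secondMomentForm hν = c • swapTraceForm n := by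
  obtain ⟨i⟩ := ‹Nonempty n›
  refine ⟨secondMomentForm hν (pureState (Pi.single i 1)) (pureState (Pi.single i 1)) / 2,
    (isExchangeSymm_secondMomentForm hν).ext_of_apply_pureState
      (isExchangeSymm_swapTraceForm.smul _) fun v ↦ ?_⟩
  rw [secondMomentForm_pureState_self hν hinv i, LinearMap.smul_apply, LinearMap.smul_apply,
    swapTraceForm_pureState_self, smul_eq_mul]
  ring

theorem IsUnitarilyInvariant.integral_expectation_mul [Nonempty n] (hinv : IsUnitarilyInvariant ν)
    (hν : MemLp id 4 ν) (A B : Matrix n n ℂ) :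
    ∫ x, expectation x A * expectation x B ∂ν =
      (∫ x, (star x ⬝ᵥ x) ^ 2 ∂ν) * (A.trace * B.trace + (A * B).trace) /
        (Fintype.card n * (Fintype.card n + 1)) := by
  obtain ⟨c, hc⟩ := exists_secondMomentForm_eq_smul hν hinv
  have hmoment (A B : Matrix n n ℂ) : ∫ x, expectation x A * expectation x B ∂ν =
      c * (A.trace * B.trace + (A * B).trace) := congr($hc A B)
  have hone : ∫ x, (star x ⬝ᵥ x) ^ 2 ∂ν = c * (Fintype.card n * (Fintype.card n + 1)) := by
    have h := hmoment 1 1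
    simp only [expectation_apply, one_mulVec, mul_one, trace_one] at h
    simp only [sq, h]
    ring
  have hcard : (Fintype.card n : ℂ) ≠ 0 := Nat.cast_ne_zero.2 Fintype.card_ne_zero
  have hcard' : (Fintype.card n + 1 : ℂ) ≠ 0 := Nat.cast_add_one_ne_zero _
  rw [hmoment, hone]
  field_simp

end Moments

section HaarOrbit

variable {n : Type*} [Fintype n] [DecidableEq n] [MeasurableSpace (unitaryGroup n ℂ)]
  [BorelSpace (unitaryGroup n ℂ)] {μ : Measure (unitaryGroup n ℂ)}

lemma isUnitarilyInvariant_map_mulVec [μ.IsMulLeftInvariant] (e₀ : n → ℂ) :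
    IsUnitarilyInvariant (μ.map fun U : unitaryGroup n ℂ ↦ (U : Matrix n n ℂ) *ᵥ e₀) := by
  intro V hV
  have hU := (continuous_unitaryGroup_mulVec e₀).measurable
  have hVcont : Continuous (V *ᵥ · : (n → ℂ) → n → ℂ) := by fun_prop
  conv_rhs => rw [← map_mul_left_eq_self μ ⟨V, hV⟩]
  rw [Measure.map_map hVcont.measurable hU, Measure.map_map hU (measurable_const_mul _)]
  congr 1
  ext1 U
  exact mulVec_mulVec _ _ _

lemma memLp_id_map_mulVec [IsFiniteMeasure μ] (e₀ : n → ℂ) (p : ENNReal) :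
    MemLp id p (μ.map fun U : unitaryGroup n ℂ ↦ (U : Matrix n n ℂ) *ᵥ e₀) := by
  have hcont := continuous_unitaryGroup_mulVec e₀
  rw [memLp_map_measure_iff aestronglyMeasurable_id hcont.aemeasurable]
  exact MemLp.of_bound hcont.aestronglyMeasurable _
    (.of_forall fun U ↦ norm_unitaryGroup_mulVec_le U e₀)

theorem stmt_12_general [Nonempty n] [IsProbabilityMeasure μ] [μ.IsMulLeftInvariant]
    (A B : Matrix n n ℂ) (e₀ : n → ℂ) :
    ∫ U : unitaryGroup n ℂ,
        (star ((U : Matrix n n ℂ) *ᵥ e₀) ⬝ᵥ A *ᵥ ((U : Matrix n n ℂ) *ᵥ e₀)) *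
          (star ((U : Matrix n n ℂ) *ᵥ e₀) ⬝ᵥ B *ᵥ ((U : Matrix n n ℂ) *ᵥ e₀)) ∂μ =
      (star e₀ ⬝ᵥ e₀) ^ 2 * (A.trace * B.trace + (A * B).trace) /
        (Fintype.card n * (Fintype.card n + 1)) := by
  have hψ := (continuous_unitaryGroup_mulVec e₀).aemeasurable (μ := μ)
  have h := (isUnitarilyInvariant_map_mulVec (μ := μ) e₀).integral_expectation_mul
    (memLp_id_map_mulVec (μ := μ) e₀ 4) A B
  rw [integral_map hψ, integral_map hψ] at h
  · simpa [expectation_apply, star_mulVec_dotProduct_mulVec_of_mem_unitaryGroup] using h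
  · exact Continuous.aestronglyMeasurable (by fun_prop)
  · exact ((continuous_expectation A).mul (continuous_expectation B)).aestronglyMeasurable

end HaarOrbit

/-- Second moment of `⟨ψ|M|ψ⟩` for a Haar-random pure state `ψ = U e₀` in `ℂ^d`:
`E[⟨ψ|M|ψ⟩²] = ((Tr M)² + Tr(M²))/(d(d+1))`.  The Haar probability measure on
`U(d)` is any left-invariant Borel probability measure. -/
theorem stmt_12 (d : ℕ) (hd : 1 ≤ d) (M : Matrix (Fin d) (Fin d) ℂ)
    [MeasurableSpace (Matrix.unitaryGroup (Fin d) ℂ)]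
    [BorelSpace (Matrix.unitaryGroup (Fin d) ℂ)]
    (μ : Measure (Matrix.unitaryGroup (Fin d) ℂ))
    [IsProbabilityMeasure μ] [μ.IsMulLeftInvariant]
    (e₀ : Fin d → ℂ) (he₀ : star e₀ ⬝ᵥ e₀ = 1) :
    (∫ U : Matrix.unitaryGroup (Fin d) ℂ,
        (star ((U : Matrix (Fin d) (Fin d) ℂ).mulVec e₀)
          ⬝ᵥ M.mulVec ((U : Matrix (Fin d) (Fin d) ℂ).mulVec e₀)) ^ 2 ∂μ)
      = (M.trace ^ 2 + (M * M).trace) / (d * (d + 1)) := by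
  have : Nonempty (Fin d) := ⟨⟨0, hd⟩⟩
  simpa [he₀, sq] using stmt_12_general (μ := μ) M M e₀
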